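/- Let φ : ℝ² → [0,1] be radial, smooth, non-negative, ≢ 0, supported in {4/3 ≤ |ξ| ≤ 3/2}, and define f_n(x) = Γ_n ∑_{k=1}^n (1/k) 2^{−2k}(x₁x₂ ∂₁∂₂φ̌)(2^k x), Γ_n = 1/ln ln n. Then the Fourier multiplier operator S with symbol ξ₁²ξ₂²/|ξ|² satisfies |S f_n(0)| ≥ c₀ Γ_n ∑_{k=1}^n 1/k, where c₀ = 4(2π)^{-1} ∫_{ℝ²} ξ₁⁴ξ₂⁴ |ξ|^{−6} φ(ξ) dξ > 0. -/

import Mathlib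

open MeasureTheory Finset
open scoped FourierTransform

/-- `Γ_n = 1 / ln(ln n)`. -/
noncomputable def Gam (n : ℕ) : ℝ := 1 / Real.log (Real.log n)

/-- The (complex-valued) inverse Fourier transform of a real function on `ℝ²`. -/
noncomputable def phinv2 (φ : EuclideanSpace ℝ (Fin 2) → ℝ) :
    EuclideanSpace ℝ (Fin 2) → ℂ :=
  𝓕⁻ (fun ξ => (φ ξ : ℂ))

/-- `∂₁∂₂φ̌`. -/
noncomputable def d12 (φ : EuclideanSpace ℝ (Fin 2) → ℝ) :
    EuclideanSpace ℝ (Fin 2) → ℂ :=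
  fun y => fderiv ℝ
    (fun η => fderiv ℝ (phinv2 φ) η (EuclideanSpace.single 1 1)) y
    (EuclideanSpace.single 0 1)

/-- `f_n(x) = Γ_n ∑_{k=1}^n (1/k) 2^{-2k} (x₁x₂ ∂₁∂₂φ̌)(2^k x)`. -/
noncomputable def fDamp (φ : EuclideanSpace ℝ (Fin 2) → ℝ) (n : ℕ) :
    EuclideanSpace ℝ (Fin 2) → ℂ :=
  fun x => (Gam n : ℂ) * ∑ k ∈ Finset.Icc 1 n,
    (((1 / (k : ℝ)) * (2 : ℝ) ^ (-(2 * (k : ℤ))) *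
        (((2 : ℝ) ^ k • x) 0 * ((2 : ℝ) ^ k • x) 1) : ℝ) : ℂ) *
      d12 φ ((2 : ℝ) ^ k • x)

/-- The Fourier multiplier with symbol `ξ₁²ξ₂²/|ξ|²`. -/
noncomputable def Smult (f : EuclideanSpace ℝ (Fin 2) → ℂ) :
    EuclideanSpace ℝ (Fin 2) → ℂ :=
  𝓕⁻ (fun ξ => (((ξ 0) ^ 2 * (ξ 1) ^ 2 / ‖ξ‖ ^ 2 : ℝ) : ℂ) * 𝓕 f ξ)

/-! Let `g = x₁x₂ ∂₁∂₂φ̌`, so that `f_n = Γ_n ∑ (1/k) 2^{-2k} g(2^k ·)`. The symbol of `S` is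
homogeneous of degree `2`, hence `S` applied to `g(2^k ·)` takes the value `2^{2k} (S g)(0)` at the
origin, which cancels the weight `2^{-2k}`. Since `ĝ = ∂₁∂₂(ξ₁ξ₂φ)` and
`∂₁∂₂(ξ₁²ξ₂²/|ξ|²) = 8 ξ₁³ξ₂³/|ξ|⁶`, two integrations by parts give
`(S g)(0) = 8 ∫ ξ₁⁴ξ₂⁴|ξ|⁻⁶ φ dξ`. The constant is `8` because the transform is normalised with
`e^{-2πi x·ξ}`, and `8 ≥ 4(2π)⁻¹`. -/

open SchwartzMap LineDeriv Module
open scoped RealInnerProductSpace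

local notation "ℝ²" => EuclideanSpace ℝ (Fin 2)

section FourierTransform

variable {V F : Type*} [NormedAddCommGroup V] [InnerProductSpace ℝ V]
  [NormedAddCommGroup F] [NormedSpace ℂ F]

lemma smulLeftCLM_inner_apply (v : V) (f : 𝓢(V, F)) (x : V) :
    smulLeftCLM F (⟪·, v⟫) f x = ⟪x, v⟫ • f x :=
  smulLeftCLM_apply_apply (by fun_prop) f x

variable [FiniteDimensional ℝ V] [MeasurableSpace V] [BorelSpace V]

lemma fourierInv_comp_smul (f : V → F) {R : ℝ} (hR : R ≠ 0) (x : V) :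
    𝓕⁻ (fun v => f (R • v)) x = |(R ^ finrank ℝ V)⁻¹| • 𝓕⁻ f (R⁻¹ • x) := by
  have hinner (v : V) : ⟪R • v, R⁻¹ • x⟫ = ⟪v, x⟫ := by
    rw [real_inner_smul_left, real_inner_smul_right, mul_inv_cancel_left₀ hR]
  simp only [Real.fourierInv_eq, ← Measure.integral_comp_smul volume, hinner]

lemma fourier_comp_smul (f : V → F) {R : ℝ} (hR : R ≠ 0) (ξ : V) :
    𝓕 (fun v => f (R • v)) ξ = |(R ^ finrank ℝ V)⁻¹| • 𝓕 f (R⁻¹ • ξ) := by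
  have h := fourierInv_comp_smul f hR (-ξ)
  simpa only [Real.fourierInv_eq_fourier_neg, smul_neg, neg_neg] using h

lemma fourierInv_lineDeriv_lineDeriv_inner_smul_inner_smul (v w : V) (f : 𝓢(V, F)) (x : V) :
    𝓕⁻ (∂_{v} (∂_{w} (smulLeftCLM F (⟪·, v⟫) (smulLeftCLM F (⟪·, w⟫) f)))) x =
      ⟪x, v⟫ • ⟪x, w⟫ • ∂_{v} (∂_{w} (𝓕⁻ f)) x := by
  have hsmul (c : ℂ) (g : 𝓢(V, F)) :
      smulLeftCLM F (⟪·, v⟫) (c • g) = c • smulLeftCLM F (⟪·, v⟫) g := by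
    ext y
    rw [smulLeftCLM_inner_apply, smul_apply, smul_apply, smulLeftCLM_inner_apply, smul_comm]
  simp only [fourierInv_lineDerivOp_eq, lineDerivOp_fourierInv_eq, FourierTransform.fourierInv_smul,
    lineDerivOp_smul, hsmul, smul_smul, neg_mul_neg, smul_apply, smulLeftCLM_inner_apply]
  module

end FourierTransform

section IntegrationByParts

variable {V F : Type*} [NormedAddCommGroup V] [NormedSpace ℝ V] [FiniteDimensional ℝ V]
  [MeasurableSpace V] [BorelSpace V] {μ : Measure V} [μ.IsAddHaarMeasure]
  [NormedAddCommGroup F] [NormedSpace ℝ F]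

lemma integrable_smul_schwartz {m : V → ℝ} (hm : Measurable m) {C : ℝ} {k : ℕ}
    (hbound : ∀ x, |m x| ≤ C * ‖x‖ ^ k) (g : 𝓢(V, F)) : Integrable (fun x => m x • g x) μ := by
  refine ((g.integrable_pow_mul μ k).const_mul C).mono'
    (hm.aestronglyMeasurable.smul g.continuous.aestronglyMeasurable) (.of_forall fun x => ?_)
  rw [norm_smul, Real.norm_eq_abs, ← mul_assoc]
  gcongr
  exact hbound x

lemma integral_smul_lineDeriv_eq_neg {m m' : V → ℝ} {v : V}
    (hderiv : ∀ x, HasLineDerivAt ℝ m (m' x) x v)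
    (hm : ∀ g : 𝓢(V, F), Integrable (fun x => m x • g x) μ)
    (hm' : ∀ g : 𝓢(V, F), Integrable (fun x => m' x • g x) μ) (g : 𝓢(V, F)) :
    ∫ x, m x • ∂_{v} g x ∂μ = -∫ x, m' x • g x ∂μ :=
  integral_bilinear_hasLineDerivAt_right_eq_neg_left_of_integrable
    (B := ContinuousLinearMap.lsmul ℝ ℝ) (hm' g) (hm (∂_{v} g)) (hm g) (fun x _ => hderiv x)
    fun x _ => by
      rw [lineDerivOp_apply]
      exact g.differentiableAt.lineDifferentiableAt.hasLineDerivAt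

end IntegrationByParts

section Coordinates

variable {ι F : Type*} [Fintype ι] [NormedAddCommGroup F] [NormedSpace ℝ F]

lemma abs_monomial_div_norm_pow_le (x : EuclideanSpace ℝ ι) (i j : ι) {a b c : ℕ}
    (h : c ≤ a + b) : |x i ^ a * x j ^ b / ‖x‖ ^ c| ≤ ‖x‖ ^ (a + b - c) := by
  rw [abs_div, abs_mul, abs_pow, abs_pow, abs_pow, abs_norm]
  refine div_le_of_le_mul₀ (by positivity) (by positivity) ?_
  rw [← pow_add, Nat.sub_add_cancel h, pow_add]
  gcongr <;> exact PiLp.norm_apply_le x _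

lemma integrable_monomial_div_norm_pow_smul (i j : ι) {a b c : ℕ} (h : c ≤ a + b)
    (g : 𝓢(EuclideanSpace ℝ ι, F)) :
    Integrable (fun x => (x i ^ a * x j ^ b / ‖x‖ ^ c) • g x) :=
  integrable_smul_schwartz (C := 1) (by fun_prop)
    (fun x => (abs_monomial_div_norm_pow_le x i j h).trans_eq (one_mul _).symm) g

lemma ae_coord_ne_zero (i : ι) : ∀ᵐ x : EuclideanSpace ℝ ι, x i ≠ 0 := by
  classical
  let coord : EuclideanSpace ℝ ι →ₗ[ℝ] ℝ := (EuclideanSpace.proj i).toLinearMap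
  have hker : coord.ker ≠ ⊤ := fun h => by
    have := LinearMap.congr_fun (LinearMap.ker_eq_top.mp h) (EuclideanSpace.single i 1)
    simp [coord] at this
  have hset : {x : EuclideanSpace ℝ ι | ¬x i ≠ 0} = coord.ker := by
    ext x
    simp [coord]
  rw [ae_iff, hset]
  exact Measure.addHaar_submodule volume coord.ker hker

end Coordinates

section Symbol

/-- The symbol `ξ₁²ξ₂²/|ξ|²` of the multiplier `S`, with value `0` at the origin. -/
noncomputable def smultSymbol (ξ : ℝ²) : ℝ := ξ 0 ^ 2 * ξ 1 ^ 2 / ‖ξ‖ ^ 2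

lemma smultSymbol_smul (R : ℝ) (ξ : ℝ²) : smultSymbol (R • ξ) = R ^ 2 * smultSymbol ξ := by
  simp only [smultSymbol, PiLp.smul_apply, smul_eq_mul, norm_smul, mul_pow, Real.norm_eq_abs,
    sq_abs]
  rcases eq_or_ne R 0 with rfl | hR
  · simp
  · field_simp

lemma norm_sq_plane (ξ : ℝ²) : ‖ξ‖ ^ 2 = ξ 0 ^ 2 + ξ 1 ^ 2 := by
  simp [EuclideanSpace.norm_sq_eq]

-- The formula persists at the origin, where the symbol vanishes along the axis and the right-hand
-- side is `0 / 0 = 0`; integrating by parts then needs no cutoff near `0`.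
lemma hasLineDerivAt_smultSymbol (ξ : ℝ²) :
    HasLineDerivAt ℝ smultSymbol (2 * (ξ 0 * ξ 1 ^ 4 / ‖ξ‖ ^ 4)) ξ (EuclideanSpace.single 0 1) := by
  have hline : (fun t : ℝ => smultSymbol (ξ + t • EuclideanSpace.single 0 1)) =
      fun t => (ξ 0 + t) ^ 2 * ξ 1 ^ 2 / ((ξ 0 + t) ^ 2 + ξ 1 ^ 2) := by
    funext t
    simp [smultSymbol, norm_sq_plane]
  rw [HasLineDerivAt, hline]
  rcases eq_or_ne ξ 0 with rfl | hξ
  · simpa using hasDerivAt_const (0 : ℝ) (0 : ℝ)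
  have hnorm : ξ 0 ^ 2 + ξ 1 ^ 2 ≠ 0 := by rw [← norm_sq_plane]; positivity
  have hsq : HasDerivAt (fun t : ℝ => (ξ 0 + t) ^ 2) (2 * ξ 0) 0 := by
    simpa using ((hasDerivAt_id' (0 : ℝ)).const_add (ξ 0)).fun_pow 2
  refine ((hsq.mul_const (ξ 1 ^ 2)).fun_div (hsq.add_const (ξ 1 ^ 2))
    (by simpa using hnorm)).congr_deriv ?_
  rw [show ‖ξ‖ ^ 4 = (‖ξ‖ ^ 2) ^ 2 by ring, norm_sq_plane, add_zero]
  ring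

lemma hasLineDerivAt_smultSymbol_deriv (ξ : ℝ²) :
    HasLineDerivAt ℝ (fun ξ : ℝ² => 2 * (ξ 0 * ξ 1 ^ 4 / ‖ξ‖ ^ 4))
      (8 * (ξ 0 ^ 3 * ξ 1 ^ 3 / ‖ξ‖ ^ 6)) ξ (EuclideanSpace.single 1 1) := by
  have hpow4 (η : ℝ²) : ‖η‖ ^ 4 = (η 0 ^ 2 + η 1 ^ 2) ^ 2 := by rw [← norm_sq_plane]; ring
  have hpow6 (η : ℝ²) : ‖η‖ ^ 6 = (η 0 ^ 2 + η 1 ^ 2) ^ 3 := by rw [← norm_sq_plane]; ring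
  have hline : (fun t : ℝ => (fun ξ : ℝ² => 2 * (ξ 0 * ξ 1 ^ 4 / ‖ξ‖ ^ 4))
        (ξ + t • EuclideanSpace.single 1 1)) =
      fun t => 2 * (ξ 0 * (ξ 1 + t) ^ 4 / (ξ 0 ^ 2 + (ξ 1 + t) ^ 2) ^ 2) := by
    funext t
    simp [hpow4]
  rw [HasLineDerivAt, hline, hpow6]
  rcases eq_or_ne ξ 0 with rfl | hξ
  · simpa using hasDerivAt_const (0 : ℝ) (0 : ℝ)
  have hnorm : ξ 0 ^ 2 + ξ 1 ^ 2 ≠ 0 := by rw [← norm_sq_plane]; positivity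
  have hid : HasDerivAt (fun t : ℝ => ξ 1 + t) 1 0 := (hasDerivAt_id' 0).const_add (ξ 1)
  refine ((((hid.fun_pow 4).const_mul (ξ 0)).fun_div
    (((hid.fun_pow 2).const_add (ξ 0 ^ 2)).fun_pow 2) (by simpa using hnorm)).const_mul
      2).congr_deriv ?_
  rw [add_zero]
  field_simp
  ring

variable {F : Type*} [NormedAddCommGroup F] [NormedSpace ℝ F]

lemma integrable_smultSymbol_smul (g : 𝓢(ℝ², F)) : Integrable fun ξ => smultSymbol ξ • g ξ :=
  integrable_monomial_div_norm_pow_smul 0 1 (by norm_num) g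

lemma integral_smultSymbol_smul_lineDeriv_lineDeriv (g : 𝓢(ℝ², F)) :
    ∫ ξ, smultSymbol ξ • ∂_{(EuclideanSpace.single 0 1 : ℝ²)}
        (∂_{(EuclideanSpace.single 1 1 : ℝ²)} g) ξ =
      ∫ ξ : ℝ², (8 * (ξ 0 ^ 3 * ξ 1 ^ 3 / ‖ξ‖ ^ 6)) • g ξ := by
  have hint (c : ℝ) {a b d : ℕ} (h : d ≤ a + b) (g : 𝓢(ℝ², F)) :
      Integrable fun ξ : ℝ² => (c * (ξ 0 ^ a * ξ 1 ^ b / ‖ξ‖ ^ d)) • g ξ := by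
    simp only [mul_smul]
    exact (integrable_monomial_div_norm_pow_smul 0 1 h g).smul c
  have hint_deriv (g : 𝓢(ℝ², F)) :
      Integrable fun ξ : ℝ² => (2 * (ξ 0 * ξ 1 ^ 4 / ‖ξ‖ ^ 4)) • g ξ := by
    simpa only [pow_one] using hint 2 (a := 1) (by norm_num) g
  rw [integral_smul_lineDeriv_eq_neg hasLineDerivAt_smultSymbol integrable_smultSymbol_smul
      hint_deriv,
    integral_smul_lineDeriv_eq_neg hasLineDerivAt_smultSymbol_deriv hint_deriv
      (hint 8 (by norm_num)),
    neg_neg]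

end Symbol

section Multiplier

lemma Smult_apply (f : ℝ² → ℂ) (x : ℝ²) :
    Smult f x = 𝓕⁻ (fun ξ => smultSymbol ξ • 𝓕 f ξ) x := by
  simp only [Smult, smultSymbol, Complex.real_smul]

lemma Smult_comp_smul (f : ℝ² → ℂ) {R : ℝ} (hR : R ≠ 0) (x : ℝ²) :
    Smult (fun y => f (R • y)) x = R ^ 2 * Smult f (R • x) := by
  have hsymbol (ξ : ℝ²) : smultSymbol ξ • 𝓕 (fun y => f (R • y)) ξ =
      smultSymbol (R⁻¹ • ξ) • 𝓕 f (R⁻¹ • ξ) := by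
    rw [fourier_comp_smul f hR, smultSymbol_smul, finrank_euclideanSpace_fin,
      abs_of_nonneg (by positivity), smul_smul, mul_comm, inv_pow]
  simp only [Smult_apply, hsymbol]
  rw [fourierInv_comp_smul (fun ξ => smultSymbol ξ • 𝓕 f ξ) (inv_ne_zero hR),
    finrank_euclideanSpace_fin, inv_inv, inv_pow, inv_inv, abs_of_nonneg (by positivity),
    Complex.real_smul, Complex.ofReal_pow]

lemma Smult_sum_smul {κ : Type*} (s : Finset κ) (c : κ → ℂ) (f : κ → 𝓢(ℝ², ℂ)) (x : ℝ²) :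
    Smult (∑ k ∈ s, c k • f k : 𝓢(ℝ², ℂ)) x = ∑ k ∈ s, c k * Smult (f k) x := by
  have hfourier : 𝓕 (∑ k ∈ s, c k • f k) = ∑ k ∈ s, c k • 𝓕 (f k) := by
    simp only [← FourierTransform.fourierCLE_apply (R := ℂ), map_sum, map_smul]
  have hintegrable (k : κ) :
      Integrable fun ξ => Real.fourierChar ⟪ξ, x⟫ • smultSymbol ξ • 𝓕 (f k) ξ := by
    simpa using (Real.fourierIntegral_convergent_iff (-x)).mpr
      (integrable_smultSymbol_smul (𝓕 (f k)))
  simp only [Smult_apply, Real.fourierInv_eq, ← fourier_coe, hfourier, _root_.sum_apply, smul_apply,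
    Finset.smul_sum, smul_comm (smultSymbol _), smul_comm (Real.fourierChar _) (c _),
    ← smul_eq_mul (c _), ← integral_smul]
  exact integral_finsetSum _ fun k _ => (hintegrable k).smul (c k)

lemma Smult_schwartz_zero (f : 𝓢(ℝ², ℂ)) : Smult f 0 = ∫ ξ, smultSymbol ξ • 𝓕 f ξ := by
  simp [Smult_apply, Real.fourierInv_eq, fourier_coe]

end Multiplier

section DampedProfile

variable (φ : 𝓢(ℝ², ℝ))

/-- The product `ξ₁ξ₂φ(ξ)`, as a complex-valued Schwartz function. -/
noncomputable def coordMul : 𝓢(ℝ², ℂ) :=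
  smulLeftCLM ℂ (⟪·, (EuclideanSpace.single 0 1 : ℝ²)⟫)
    (smulLeftCLM ℂ (⟪·, (EuclideanSpace.single 1 1 : ℝ²)⟫) (φ.postcompCLM Complex.ofRealCLM))

/-- The building block `x₁x₂ ∂₁∂₂φ̌` of `fDamp`, defined through its Fourier transform
`∂₁∂₂(ξ₁ξ₂φ)`. -/
noncomputable def dampedProfile : 𝓢(ℝ², ℂ) :=
  𝓕⁻ (∂_{(EuclideanSpace.single 0 1 : ℝ²)} (∂_{(EuclideanSpace.single 1 1 : ℝ²)} (coordMul φ)))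

lemma coordMul_apply (ξ : ℝ²) : coordMul φ ξ = ((ξ 0 * ξ 1 * φ ξ : ℝ) : ℂ) := by
  rw [coordMul, smulLeftCLM_inner_apply, smulLeftCLM_inner_apply]
  simp [EuclideanSpace.inner_single_right, mul_assoc]

lemma d12_eq_lineDeriv_lineDeriv_fourierInv : d12 φ =
    ∂_{(EuclideanSpace.single 0 1 : ℝ²)} (∂_{(EuclideanSpace.single 1 1 : ℝ²)}
      (𝓕⁻ (φ.postcompCLM Complex.ofRealCLM))) := by
  have hφ : phinv2 φ = 𝓕⁻ (φ.postcompCLM Complex.ofRealCLM) := by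
    rw [fourierInv_coe]
    rfl
  funext x
  rw [d12, hφ]
  rfl

lemma dampedProfile_apply (x : ℝ²) : dampedProfile φ x = ((x 0 * x 1 : ℝ) : ℂ) * d12 φ x := by
  rw [dampedProfile, coordMul, fourierInv_lineDeriv_lineDeriv_inner_smul_inner_smul,
    d12_eq_lineDeriv_lineDeriv_fourierInv]
  simp [EuclideanSpace.inner_single_right, mul_assoc]

lemma Smult_dampedProfile_zero : Smult (dampedProfile φ) 0 =
    ((8 * ∫ ξ : ℝ², ξ 0 ^ 4 * ξ 1 ^ 4 / ‖ξ‖ ^ 6 * φ ξ : ℝ) : ℂ) := by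
  rw [Smult_schwartz_zero, dampedProfile, FourierTransform.fourier_fourierInv_eq,
    integral_smultSymbol_smul_lineDeriv_lineDeriv, ← integral_const_mul, ← integral_complex_ofReal]
  congr 1 with ξ
  rw [coordMul_apply, Complex.real_smul, ← Complex.ofReal_mul]
  ring_nf

/-- The dilate `x ↦ f (2^k x)` of a Schwartz function. -/
noncomputable def dyadicDilation (k : ℕ) (f : 𝓢(ℝ², ℂ)) : 𝓢(ℝ², ℂ) :=
  compCLMOfContinuousLinearEquiv ℂ
    (ContinuousLinearEquiv.smulLeft (Units.mk0 ((2 : ℝ) ^ k) (by positivity))) f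

lemma coe_dyadicDilation (k : ℕ) (f : 𝓢(ℝ², ℂ)) :
    dyadicDilation k f = fun x => f ((2 : ℝ) ^ k • x) := rfl

lemma fDamp_eq_sum_dyadicDilation (n : ℕ) : fDamp φ n =
    (∑ k ∈ Icc 1 n, ((Gam n * (1 / k * 2 ^ (-(2 * (k : ℤ)))) : ℝ) : ℂ) •
      dyadicDilation k (dampedProfile φ) : 𝓢(ℝ², ℂ)) := by
  funext x
  simp only [fDamp, _root_.sum_apply, smul_apply, coe_dyadicDilation, dampedProfile_apply,
    Finset.mul_sum, smul_eq_mul]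
  refine Finset.sum_congr rfl fun k _ => ?_
  push_cast
  ring

lemma Smult_fDamp_zero (n : ℕ) : Smult (fDamp φ n) 0 =
    ((8 * (∫ ξ : ℝ², ξ 0 ^ 4 * ξ 1 ^ 4 / ‖ξ‖ ^ 6 * φ ξ) * Gam n *
      ∑ k ∈ Icc 1 n, (1 : ℝ) / k : ℝ) : ℂ) := by
  have hweight (k : ℕ) : (2 : ℝ) ^ (-(2 * (k : ℤ))) * (2 ^ k) ^ 2 = 1 := by
    rw [← pow_mul, mul_comm k, zpow_neg]
    exact inv_mul_cancel₀ (by positivity)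
  rw [fDamp_eq_sum_dyadicDilation, Smult_sum_smul, Finset.mul_sum, Complex.ofReal_sum]
  refine Finset.sum_congr rfl fun k _ => ?_
  rw [coe_dyadicDilation, Smult_comp_smul _ (by positivity), smul_zero, Smult_dampedProfile_zero,
    ← Complex.ofReal_pow, ← Complex.ofReal_mul, ← Complex.ofReal_mul]
  congr 1
  linear_combination (Gam n * (1 / k) * (8 * ∫ ξ : ℝ², ξ 0 ^ 4 * ξ 1 ^ 4 / ‖ξ‖ ^ 6 * φ ξ)) *
    hweight k

variable {φ}

lemma integral_quartic_div_norm_pow_mul_pos (hnonneg : ∀ ξ, 0 ≤ φ ξ) (hne : φ ≠ 0) :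
    0 < ∫ ξ : ℝ², ξ 0 ^ 4 * ξ 1 ^ 4 / ‖ξ‖ ^ 6 * φ ξ := by
  have hintegrand : 0 ≤ fun ξ : ℝ² => ξ 0 ^ 4 * ξ 1 ^ 4 / ‖ξ‖ ^ 6 * φ ξ := fun ξ =>
    mul_nonneg (by positivity) (hnonneg ξ)
  refine (integral_nonneg hintegrand).lt_of_ne' fun hzero => hne ?_
  rw [integral_eq_zero_iff_of_nonneg hintegrand
    (integrable_monomial_div_norm_pow_smul 0 1 (by norm_num) φ)] at hzero
  refine DFunLike.coe_injective
    ((φ.continuous.ae_eq_iff_eq volume continuous_zero).mp ?_)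
  filter_upwards [hzero, ae_coord_ne_zero 0, ae_coord_ne_zero 1] with ξ hξ h0 h1
  have hnorm : ‖ξ‖ ≠ 0 := norm_ne_zero_iff.mpr fun h => h0 (by simp [h])
  simpa [h0, h1, hnorm] using hξ

end DampedProfile

lemma Gam_nonneg {n : ℕ} (hn : 3 ≤ n) : 0 ≤ Gam n := by
  have hexp : Real.exp 1 ≤ n :=
    (Real.exp_one_lt_d9.le.trans (by norm_num)).trans (Nat.cast_le.mpr hn : ((3 : ℕ) : ℝ) ≤ n)
  have hlog : 1 ≤ Real.log n := (Real.le_log_iff_exp_le (by positivity)).mpr hexp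
  exact one_div_nonneg.mpr (Real.log_nonneg hlog)

theorem stmt15_general (φ : 𝓢(ℝ², ℝ)) (hnonneg : ∀ ξ, 0 ≤ φ ξ) (hne : φ ≠ 0) :
    0 < 4 * (2 * Real.pi)⁻¹ * ∫ ξ : ℝ², (ξ 0) ^ 4 * (ξ 1) ^ 4 / ‖ξ‖ ^ 6 * φ ξ ∧
    ∀ n : ℕ, 3 ≤ n →
      (4 * (2 * Real.pi)⁻¹ * ∫ ξ : ℝ², (ξ 0) ^ 4 * (ξ 1) ^ 4 / ‖ξ‖ ^ 6 * φ ξ) *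
        Gam n * ∑ k ∈ Finset.Icc 1 n, (1 : ℝ) / k ≤ ‖Smult (fDamp φ n) 0‖ := by
  have hpos := integral_quartic_div_norm_pow_mul_pos hnonneg hne
  refine ⟨by positivity, fun n hn => ?_⟩
  have hconst : 4 * (2 * Real.pi)⁻¹ ≤ 8 := by
    have : (2 * Real.pi)⁻¹ ≤ 1 := inv_le_one_of_one_le₀ (by linarith [Real.pi_gt_three])
    linarith
  have hGam := Gam_nonneg hn
  rw [Smult_fDamp_zero, Complex.norm_real]
  refine le_trans ?_ (Real.le_norm_self _)
  gcongr

/-- for radial, smooth, non-negative `φ : ℝ² → [0,1]` supported in the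
annulus, not identically zero, the multiplier `S` with symbol `ξ₁²ξ₂²/|ξ|²` satisfies
`|S f_n(0)| ≥ c₀ Γ_n ∑_{k=1}^n 1/k` with `c₀ = 4(2π)^{-1} ∫ ξ₁⁴ξ₂⁴|ξ|⁻⁶ φ dξ > 0`. -/
theorem stmt15 (φ : EuclideanSpace ℝ (Fin 2) → ℝ)
    (hsm : ContDiff ℝ (⊤ : ℕ∞) φ)
    (hrange : ∀ ξ, φ ξ ∈ Set.Icc (0 : ℝ) 1)
    (hradial : ∀ ξ η : EuclideanSpace ℝ (Fin 2), ‖ξ‖ = ‖η‖ → φ ξ = φ η)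
    (hsupp : ∀ ξ, φ ξ ≠ 0 → 4 / 3 ≤ ‖ξ‖ ∧ ‖ξ‖ ≤ 3 / 2)
    (hne : φ ≠ 0) :
    0 < 4 * (2 * Real.pi)⁻¹ *
        ∫ ξ : EuclideanSpace ℝ (Fin 2), (ξ 0) ^ 4 * (ξ 1) ^ 4 / ‖ξ‖ ^ 6 * φ ξ ∧
    ∀ n : ℕ, 3 ≤ n →
      (4 * (2 * Real.pi)⁻¹ *
          ∫ ξ : EuclideanSpace ℝ (Fin 2), (ξ 0) ^ 4 * (ξ 1) ^ 4 / ‖ξ‖ ^ 6 * φ ξ) *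
        Gam n * ∑ k ∈ Finset.Icc 1 n, (1 : ℝ) / k ≤ ‖Smult (fDamp φ n) 0‖ := by
  have hcompact : HasCompactSupport φ :=
    .of_support_subset_isCompact (isCompact_closedBall 0 (3 / 2)) fun ξ hξ =>
      mem_closedBall_zero_iff.mpr (hsupp ξ hξ).2
  exact stmt15_general (hcompact.toSchwartzMap hsm) (fun ξ => (hrange ξ).1)
    fun h => hne (congrArg DFunLike.coe h)
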